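/- arXiv:2307.07244 — 3 statements merged into one kernel-verified Lean document; each statement's English description precedes it below -/
import Mathlib

section
/- For every complex 2×2 Jones matrix J, the Mueller matrix M = ξ(J) = A (J ⊗ J*) A⁻¹ (with entries indexed M_{nm}, n,m ∈ {0,1,2,3}) satisfies det(M) = (M₀₀² − M₀₁² − M₀₂² − M₀₃²)² and also det(M) = (M₀₀² − M₁₀² − M₂₀² − M₃₀²)², i.e., the determinant can be expressed from a single row or a single column of M. -/
open Matrix Complex
open scoped Kronecker Matrix

/-- The matrix `A` relating the Kronecker-product picture to the Mueller picture. -/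
noncomputable def muellerA : Matrix (Fin 4) (Fin 4) ℂ :=
  !![1, 0, 0, 1;
     1, 0, 0, -1;
     0, 1, 1, 0;
     0, Complex.I, -Complex.I, 0]

/-- The Mueller matrix `ξ(J) = A (J ⊗ J*) A⁻¹` of a Jones matrix `J`. -/
noncomputable def mueller (J : Matrix (Fin 2) (Fin 2) ℂ) : Matrix (Fin 4) (Fin 4) ℂ :=
  muellerA * (Matrix.reindex finProdFinEquiv finProdFinEquiv (J ⊗ₖ J.map star)) * muellerA⁻¹


theorem muellerA_inv : muellerA⁻¹ = (1/2 : ℂ) • !![1, 1, 0, 0; 0, 0, 1, -Complex.I; 0, 0, 1, Complex.I; 1, -1, 0, 0] := by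
  apply Matrix.inv_eq_right_inv
  ext i j
  fin_cases i <;> fin_cases j <;>
    simp [muellerA, Matrix.mul_apply, Fin.sum_univ_four] <;> ring_nf <;> simp

theorem mueller_kron (J : Matrix (Fin 2) (Fin 2) ℂ) :
    Matrix.reindex finProdFinEquiv finProdFinEquiv (J ⊗ₖ J.map star) =
    !![J 0 0 * star (J 0 0), J 0 0 * star (J 0 1), J 0 1 * star (J 0 0), J 0 1 * star (J 0 1);
       J 0 0 * star (J 1 0), J 0 0 * star (J 1 1), J 0 1 * star (J 1 0), J 0 1 * star (J 1 1);
       J 1 0 * star (J 0 0), J 1 0 * star (J 0 1), J 1 1 * star (J 0 0), J 1 1 * star (J 0 1);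
       J 1 0 * star (J 1 0), J 1 0 * star (J 1 1), J 1 1 * star (J 1 0), J 1 1 * star (J 1 1)] := by
  ext i j
  fin_cases i <;> fin_cases j <;> rfl

theorem mueller_det (J : Matrix (Fin 2) (Fin 2) ℂ) :
    (mueller J).det = ((J 0 0 * J 1 1 - J 0 1 * J 1 0) *
      (star (J 0 0) * star (J 1 1) - star (J 0 1) * star (J 1 0))) ^ 2 := by
  have hu : IsUnit muellerA.det := by
    apply Matrix.isUnit_det_of_right_inverse (B := (1/2 : ℂ) • !![1, 1, 0, 0; 0, 0, 1, -Complex.I; 0, 0, 1, Complex.I; 1, -1, 0, 0])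
    ext i j
    fin_cases i <;> fin_cases j <;>
      simp [muellerA, Matrix.mul_apply, Fin.sum_univ_four] <;> ring_nf <;> simp
  have hA : muellerA.det * (muellerA⁻¹).det = 1 := by
    rw [← Matrix.det_mul, Matrix.mul_nonsing_inv _ hu, Matrix.det_one]
  rw [mueller, Matrix.det_mul, Matrix.det_mul, mul_right_comm, hA, one_mul,
    Matrix.det_reindex_self, Matrix.det_kronecker, Matrix.det_fin_two, Matrix.det_fin_two]
  simp [mul_pow]

/-- the determinant of a Mueller matrix `M = ξ(J)` can be expressed from a
single row or a single column: `det M = (M₀₀² − M₀₁² − M₀₂² − M₀₃²)²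
= (M₀₀² − M₁₀² − M₂₀² − M₃₀²)²`. -/
theorem det_mueller_row_col (J : Matrix (Fin 2) (Fin 2) ℂ) :
    (mueller J).det =
        ((mueller J 0 0) ^ 2 - (mueller J 0 1) ^ 2 - (mueller J 0 2) ^ 2
          - (mueller J 0 3) ^ 2) ^ 2 ∧
      (mueller J).det =
        ((mueller J 0 0) ^ 2 - (mueller J 1 0) ^ 2 - (mueller J 2 0) ^ 2
          - (mueller J 3 0) ^ 2) ^ 2 := by
  rw [mueller_det]
  have hI : Complex.I ^ 2 = -1 := Complex.I_sq
  constructor <;> congr 1 <;> rw [mueller, muellerA_inv, mueller_kron] <;>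
    generalize star (J 0 0) = a <;> generalize star (J 0 1) = b <;>
    generalize star (J 1 0) = c <;> generalize star (J 1 1) = d <;>
    simp [muellerA, Matrix.mul_apply, Fin.sum_univ_four] <;> ring_nf <;> simp only [hI] <;> ring
end

section
/- Let k₀, k₁, k₂, k₃ be real numbers with k₁² + k₂² + k₃² = 1, and let c = e^{i k₀} (0, k₁, k₂, k₃)ᵀ ∈ ℂ⁴. Then the matrix M with entries M_{nm} = cᴴ Γ_{nm} c satisfies M₀₀ = 1 and M₀₁ = M₀₂ = M₀₃ = M₁₀ = M₂₀ = M₃₀ = 0; consequently both transmittance quantities g_f = M₀₀ + √(M₀₁²+M₀₂²+M₀₃²) and g_r = M₀₀ + √(M₁₀²+M₂₀²+M₃₀²) equal 1. -/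
open Matrix Complex
open scoped Kronecker Matrix

/-- The Pauli matrices `σ₀, σ₁, σ₂, σ₃`. -/
noncomputable def pauli : Fin 4 → Matrix (Fin 2) (Fin 2) ℂ :=
  ![1, !![1, 0; 0, -1], !![0, 1; 1, 0], !![0, -Complex.I; Complex.I, 0]]

/-- The matrices `Γ_{nm} = A (σ_n ⊗ σ_m*) A⁻¹`. -/
noncomputable def Gamma (n m : Fin 4) : Matrix (Fin 4) (Fin 4) ℂ :=
  muellerA * (Matrix.reindex finProdFinEquiv finProdFinEquiv
    (pauli n ⊗ₖ (pauli m).map star)) * muellerA⁻¹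

theorem muellerA_inv_eq : muellerA⁻¹ = !![1/2, 1/2, 0, 0;
     0, 0, 1/2, -Complex.I/2;
     0, 0, 1/2, Complex.I/2;
     1/2, -1/2, 0, 0] := by
  apply Matrix.inv_eq_right_inv
  ext i j
  fin_cases i <;> fin_cases j <;>
    simp [muellerA, Matrix.mul_apply, Fin.sum_univ_four] <;> ring_nf <;> simp

theorem reindex_kron_eq (P Q : Matrix (Fin 2) (Fin 2) ℂ) :
    Matrix.reindex finProdFinEquiv finProdFinEquiv (P ⊗ₖ Q) =
    !![P 0 0 * Q 0 0, P 0 0 * Q 0 1, P 0 1 * Q 0 0, P 0 1 * Q 0 1;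
       P 0 0 * Q 1 0, P 0 0 * Q 1 1, P 0 1 * Q 1 0, P 0 1 * Q 1 1;
       P 1 0 * Q 0 0, P 1 0 * Q 0 1, P 1 1 * Q 0 0, P 1 1 * Q 0 1;
       P 1 0 * Q 1 0, P 1 0 * Q 1 1, P 1 1 * Q 1 0, P 1 1 * Q 1 1] := by
  ext i j
  fin_cases i <;> fin_cases j <;> rfl

theorem quad_form_eq (n m : Fin 4) (e : ℂ) (he : star e * e = 1) (k₁ k₂ k₃ : ℝ) (c : Fin 4 → ℂ)
    (hc : c = fun i => e * ![0, (k₁ : ℂ), (k₂ : ℂ), (k₃ : ℂ)] i) :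
    star c ⬝ᵥ (Gamma n m).mulVec c =
      k₁ * (Gamma n m 1 1 * k₁ + Gamma n m 1 2 * k₂ + Gamma n m 1 3 * k₃) +
      k₂ * (Gamma n m 2 1 * k₁ + Gamma n m 2 2 * k₂ + Gamma n m 2 3 * k₃) +
      k₃ * (Gamma n m 3 1 * k₁ + Gamma n m 3 2 * k₂ + Gamma n m 3 3 * k₃) := by
  subst hc
  simp only [Matrix.mulVec, dotProduct, Fin.sum_univ_four, Pi.star_apply, star_mul']
  simp at he ⊢
  linear_combination (k₁ * (Gamma n m 1 1 * k₁ + Gamma n m 1 2 * k₂ + Gamma n m 1 3 * k₃) +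
      k₂ * (Gamma n m 2 1 * k₁ + Gamma n m 2 2 * k₂ + Gamma n m 2 3 * k₃) +
      k₃ * (Gamma n m 3 1 * k₁ + Gamma n m 3 2 * k₂ + Gamma n m 3 3 * k₃)) * he

/-- for `c = e^{i k₀} (0, k₁, k₂, k₃)ᵀ` with `k₁² + k₂² + k₃² = 1`, the
matrix `M_{nm} = cᴴ Γ_{nm} c` satisfies `M₀₀ = 1` and
`M₀₁ = M₀₂ = M₀₃ = M₁₀ = M₂₀ = M₃₀ = 0`; consequently both transmittance quantities
`g_f = M₀₀ + √(M₀₁²+M₀₂²+M₀₃²)` and `g_r = M₀₀ + √(M₁₀²+M₂₀²+M₃₀²)` equal `1`. -/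
theorem golden_mueller_transmittance (k₀ k₁ k₂ k₃ : ℝ)
    (hk : k₁ ^ 2 + k₂ ^ 2 + k₃ ^ 2 = 1)
    (c : Fin 4 → ℂ)
    (hc : c = fun i => Complex.exp (Complex.I * k₀) * ![0, (k₁ : ℂ), (k₂ : ℂ), (k₃ : ℂ)] i)
    (M : Matrix (Fin 4) (Fin 4) ℂ)
    (hM : M = Matrix.of fun n m => star c ⬝ᵥ (Gamma n m).mulVec c) :
    M 0 0 = 1 ∧
      M 0 1 = 0 ∧ M 0 2 = 0 ∧ M 0 3 = 0 ∧
      M 1 0 = 0 ∧ M 2 0 = 0 ∧ M 3 0 = 0 ∧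
      (M 0 0).re + Real.sqrt ((M 0 1).re ^ 2 + (M 0 2).re ^ 2 + (M 0 3).re ^ 2) = 1 ∧
      (M 0 0).re + Real.sqrt ((M 1 0).re ^ 2 + (M 2 0).re ^ 2 + (M 3 0).re ^ 2) = 1 := by
  have he : star (Complex.exp (Complex.I * k₀)) * Complex.exp (Complex.I * k₀) = 1 := by
    rw [Complex.star_def, ← Complex.exp_conj, ← Complex.exp_add]
    simp
  have hk' : (k₁ : ℂ) ^ 2 + (k₂ : ℂ) ^ 2 + (k₃ : ℂ) ^ 2 = 1 := by exact_mod_cast hk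
  have hI : Complex.I ^ 2 = -1 := Complex.I_sq
  have key : ∀ n m, M n m = _ := fun n m => by
    rw [hM]; exact quad_form_eq n m _ he k₁ k₂ k₃ c hc
  have h00 : M 0 0 = 1 := by
    rw [key]
    simp only [_root_.Gamma, muellerA_inv_eq, reindex_kron_eq]
    simp [pauli, muellerA, Matrix.mul_apply,
      Fin.sum_univ_four]
    grind
  have h0 : M 0 1 = 0 ∧ M 0 2 = 0 ∧ M 0 3 = 0 ∧ M 1 0 = 0 ∧ M 2 0 = 0 ∧ M 3 0 = 0 := by
    refine ⟨?_, ?_, ?_, ?_, ?_, ?_⟩ <;> rw [key] <;>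
    simp only [_root_.Gamma, muellerA_inv_eq, reindex_kron_eq] <;>
    simp [pauli, muellerA, Matrix.mul_apply,
      Fin.sum_univ_four] <;> grind
  obtain ⟨h1, h2, h3, h4, h5, h6⟩ := h0
  simp [h00, h1, h2, h3, h4, h5, h6]
end

section
/- For signs ε₁, ε₂, ε₃ ∈ {−1, +1}, the coherency matrix of the diagonal Mueller matrix M = diag(1, ε₁, ε₂, ε₃), namely C = (1/4)(Γ₀₀ + ε₁Γ₁₁ + ε₂Γ₂₂ + ε₃Γ₃₃), equals the diagonal matrix (1/4)·diag(1+ε₁+ε₂+ε₃, 1+ε₁−ε₂−ε₃, 1−ε₁+ε₂−ε₃, 1−ε₁−ε₂+ε₃), and C is positive semidefinite if and only if (ε₁,ε₂,ε₃) is one of (1,1,1), (1,−1,−1), (−1,1,−1), (−1,−1,1), i.e., the number of −1 entries is even; in particular diag(1,−1,−1,−1) fails the eigenvalue condition. -/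
open Matrix Complex
open scoped Kronecker Matrix ComplexOrder

lemma mA_left_inv : ((1/2 : ℂ) • muellerAᴴ) * muellerA = 1 := by
  ext i j
  fin_cases i <;> fin_cases j <;>
    simp [muellerA, Matrix.mul_apply, Fin.sum_univ_four] <;> norm_num [mul_assoc, Complex.I_mul_I]

lemma mA_mul_inv : muellerA * muellerA⁻¹ = 1 :=
  Matrix.mul_nonsing_inv _ (Matrix.isUnit_det_of_left_inverse mA_left_inv)

lemma Gamma_of (n m : Fin 4) (d : Matrix (Fin 4) (Fin 4) ℂ)
    (h : muellerA * (Matrix.reindex finProdFinEquiv finProdFinEquiv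
      (pauli n ⊗ₖ (pauli m).map star)) = d * muellerA) : Gamma n m = d := by
  unfold _root_.Gamma
  rw [h, Matrix.mul_assoc, mA_mul_inv, Matrix.mul_one]

lemma Gamma_0 : Gamma 0 0 = Matrix.diagonal ![1, 1, 1, 1] := by
  apply Gamma_of
  ext i j
  fin_cases i <;> fin_cases j <;>
    simp [muellerA, pauli, Matrix.mul_apply, Fin.sum_univ_four, finProdFinEquiv, Fin.divNat,
      Fin.modNat, Matrix.one_apply]

lemma Gamma_1 : Gamma 1 1 = Matrix.diagonal ![1, 1, -1, -1] := by
  apply Gamma_of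
  ext i j
  fin_cases i <;> fin_cases j <;>
    simp [muellerA, pauli, Matrix.mul_apply, Fin.sum_univ_four, finProdFinEquiv, Fin.divNat,
      Fin.modNat, Matrix.one_apply]

lemma Gamma_2 : Gamma 2 2 = Matrix.diagonal ![1, -1, 1, -1] := by
  apply Gamma_of
  ext i j
  fin_cases i <;> fin_cases j <;>
    simp [muellerA, pauli, Matrix.mul_apply, Fin.sum_univ_four, finProdFinEquiv, Fin.divNat,
      Fin.modNat, Matrix.one_apply]

lemma Gamma_3 : Gamma 3 3 = Matrix.diagonal ![1, -1, -1, 1] := by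
  apply Gamma_of
  ext i j
  fin_cases i <;> fin_cases j <;>
    simp [muellerA, pauli, Matrix.mul_apply, Fin.sum_univ_four, finProdFinEquiv, Fin.divNat,
      Fin.modNat, Matrix.one_apply]

lemma coh_eq (a b c : ℝ) : (1 / 4 : ℂ) •
      (Gamma 0 0 + (a : ℂ) • Gamma 1 1 + (b : ℂ) • Gamma 2 2 + (c : ℂ) • Gamma 3 3) =
    Matrix.diagonal
        ![(((1 + a + b + c) / 4 : ℝ) : ℂ), (((1 + a - b - c) / 4 : ℝ) : ℂ),
          (((1 - a + b - c) / 4 : ℝ) : ℂ), (((1 - a - b + c) / 4 : ℝ) : ℂ)] := by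
  rw [Gamma_0, Gamma_1, Gamma_2, Gamma_3]
  ext i j
  fin_cases i <;> fin_cases j <;> simp <;> ring

lemma coh_psd (a b c : ℝ) : ((1 / 4 : ℂ) •
      (Gamma 0 0 + (a : ℂ) • Gamma 1 1 + (b : ℂ) • Gamma 2 2 + (c : ℂ) • Gamma 3 3)).PosSemidef ↔
    0 ≤ (1 + a + b + c) / 4 ∧ 0 ≤ (1 + a - b - c) / 4 ∧
    0 ≤ (1 - a + b - c) / 4 ∧ 0 ≤ (1 - a - b + c) / 4 := by
  rw [coh_eq, Matrix.posSemidef_diagonal_iff, Fin.forall_fin_succ, Fin.forall_fin_succ,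
    Fin.forall_fin_succ, Fin.forall_fin_one]
  refine and_congr ?_ (and_congr ?_ (and_congr ?_ ?_)) <;> exact Complex.zero_le_real

/-- for signs `ε₁, ε₂, ε₃ ∈ {−1, +1}`, the coherency matrix
`C = (1/4)(Γ₀₀ + ε₁Γ₁₁ + ε₂Γ₂₂ + ε₃Γ₃₃)` of the diagonal Mueller matrix
`diag(1, ε₁, ε₂, ε₃)` equals `(1/4)·diag(1+ε₁+ε₂+ε₃, 1+ε₁−ε₂−ε₃, 1−ε₁+ε₂−ε₃, 1−ε₁−ε₂+ε₃)`,
and `C` is positive semidefinite iff the number of `−1` entries among `(ε₁,ε₂,ε₃)` is even;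
in particular `diag(1,−1,−1,−1)` fails the eigenvalue condition. -/
theorem coherency_diagonal_signs (ε₁ ε₂ ε₃ : ℝ)
    (h₁ : ε₁ = 1 ∨ ε₁ = -1) (h₂ : ε₂ = 1 ∨ ε₂ = -1) (h₃ : ε₃ = 1 ∨ ε₃ = -1)
    (C : Matrix (Fin 4) (Fin 4) ℂ)
    (hC : C = (1 / 4 : ℂ) •
      (Gamma 0 0 + (ε₁ : ℂ) • Gamma 1 1 + (ε₂ : ℂ) • Gamma 2 2 + (ε₃ : ℂ) • Gamma 3 3)) :
    C = Matrix.diagonal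
        ![(((1 + ε₁ + ε₂ + ε₃) / 4 : ℝ) : ℂ), (((1 + ε₁ - ε₂ - ε₃) / 4 : ℝ) : ℂ),
          (((1 - ε₁ + ε₂ - ε₃) / 4 : ℝ) : ℂ), (((1 - ε₁ - ε₂ + ε₃) / 4 : ℝ) : ℂ)] ∧
      (C.PosSemidef ↔
        (ε₁, ε₂, ε₃) = (1, 1, 1) ∨ (ε₁, ε₂, ε₃) = (1, -1, -1) ∨
          (ε₁, ε₂, ε₃) = (-1, 1, -1) ∨ (ε₁, ε₂, ε₃) = (-1, -1, 1)) ∧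
      ¬ ((1 / 4 : ℂ) •
          (Gamma 0 0 + (-1 : ℂ) • Gamma 1 1 + (-1 : ℂ) • Gamma 2 2 +
            (-1 : ℂ) • Gamma 3 3)).PosSemidef := by
  subst hC
  refine ⟨coh_eq _ _ _, ?_, ?_⟩
  · rw [coh_psd]
    rcases h₁ with rfl | rfl <;> rcases h₂ with rfl | rfl <;> rcases h₃ with rfl | rfl <;>
      norm_num
  · have h := coh_psd (-1) (-1) (-1)
    push_cast at h
    rw [h]
    norm_num
end
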